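/- (Observed-simultaneity classes are backward light cones.) Let A = {p + t•v : t ∈ ℝ} be an inertial observer in Minkowski spacetime, with v a future-directed unit timelike vector, and for an event x set τ(x) = η(x − p, v) and ρ(x) = √(−η(w,w)) where w = (x − p) − τ(x)•v. Then for every event x, the observed-simultaneity class of x relative to A, {y : τ(y) + ρ(y) = τ(x) + ρ(x)}, equals the backward light cone of the event a = p + (τ(x) + ρ(x))•v ∈ A, i.e., equals {y : η(y − a, y − a) = 0 and η(y − a, v) ≤ 0}. -/

import Mathlib

/-!
Write `y - p = τ(y) v + w` with `w` orthogonal to `v`. On the orthogonal complement of a unit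
timelike vector the form `η` is negative semidefinite (`eta_self_nonpos_of_orthogonal`), so the
square root defining `ρ` is not truncated and `ρ(y)² = -η(w, w)`. For `a = p + c v` on the
world-line this gives `η(y - a, y - a) = (τ(y) - c)² - ρ(y)²` and `η(y - a, v) = τ(y) - c`. Since
`ρ(y) ≥ 0`, the equation `τ(y) + ρ(y) = c` says exactly that the first expression vanishes and the
second is nonpositive.
-/

/-- Minkowski spacetime: ℝ⁴ as functions `Fin 4 → ℝ`. -/
abbrev M4 : Type := Fin 4 → ℝ

/-- The Minkowski bilinear form. -/
def eta (x y : M4) : ℝ := x 0 * y 0 - x 1 * y 1 - x 2 * y 2 - x 3 * y 3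

/-- Time coordinate of an event relative to the observer `{p + t•v}`. -/
def tau (p v x : M4) : ℝ := eta (x - p) v

/-- Spatial radius of an event relative to the observer `{p + t•v}`. -/
noncomputable def rho (p v x : M4) : ℝ :=
  Real.sqrt (-(eta ((x - p) - tau p v x • v) ((x - p) - tau p v x • v)))

/-- The reversed Cauchy–Schwarz inequality in its orthogonal form: a vector orthogonal to a unit
timelike vector is not timelike. -/
theorem eta_self_nonpos_of_orthogonal (v w : M4) (hv : eta v v = 1) (hw : eta w v = 0) :
    eta w w ≤ 0 := by
  unfold eta at *
  -- Lagrange's identity gives the Euclidean Cauchy–Schwarz inequality for the spatial parts.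
  have cs : (w 1 * v 1 + w 2 * v 2 + w 3 * v 3) ^ 2 ≤
      (w 1 ^ 2 + w 2 ^ 2 + w 3 ^ 2) * (v 1 ^ 2 + v 2 ^ 2 + v 3 ^ 2) := by
    nlinarith [sq_nonneg (w 1 * v 2 - w 2 * v 1), sq_nonneg (w 1 * v 3 - w 3 * v 1),
      sq_nonneg (w 2 * v 3 - w 3 * v 2)]
  have h1 : w 1 * v 1 + w 2 * v 2 + w 3 * v 3 = w 0 * v 0 := by linarith
  have h2 : v 1 ^ 2 + v 2 ^ 2 + v 3 ^ 2 = v 0 ^ 2 - 1 := by linarith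
  have h3 : 0 ≤ v 0 ^ 2 - 1 := by rw [← h2]; positivity
  rw [h1, h2] at cs
  by_contra! h
  have h4 := mul_nonneg h.le h3
  have h5 : 0 ≤ w 1 ^ 2 + w 2 ^ 2 + w 3 ^ 2 := by positivity
  nlinarith

theorem eta_sub_tau_smul (p v y : M4) (hv : eta v v = 1) :
    eta ((y - p) - tau p v y • v) v = 0 := by
  have h : eta ((y - p) - tau p v y • v) v = eta (y - p) v - tau p v y * eta v v := by
    simp only [eta, Pi.sub_apply, Pi.smul_apply, smul_eq_mul]; ring
  rw [h, hv, tau]; ring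

theorem rho_sq (p v y : M4) (hv : eta v v = 1) :
    rho p v y ^ 2 = -eta ((y - p) - tau p v y • v) ((y - p) - tau p v y • v) :=
  Real.sq_sqrt (neg_nonneg.2
    (eta_self_nonpos_of_orthogonal v _ hv (eta_sub_tau_smul p v y hv)))

theorem eta_sub_worldline_right (p v y : M4) (c : ℝ) (hv : eta v v = 1) :
    eta (y - (p + c • v)) v = tau p v y - c := by
  have h : eta (y - (p + c • v)) v = eta (y - p) v - c * eta v v := by
    simp only [eta, Pi.sub_apply, Pi.add_apply, Pi.smul_apply, smul_eq_mul]; ring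
  rw [h, hv, tau]; ring

theorem eta_sub_worldline_self (p v y : M4) (c : ℝ) (hv : eta v v = 1) :
    eta (y - (p + c • v)) (y - (p + c • v)) = (tau p v y - c) ^ 2 - rho p v y ^ 2 := by
  have h0 := eta_sub_tau_smul p v y hv
  rw [rho_sq p v y hv]
  generalize tau p v y = t at *
  have h : eta (y - (p + c • v)) (y - (p + c • v)) =
      eta ((y - p) - t • v) ((y - p) - t • v)
        + 2 * (t - c) * eta ((y - p) - t • v) v + (t - c) ^ 2 * eta v v := by
    simp only [eta, Pi.sub_apply, Pi.add_apply, Pi.smul_apply, smul_eq_mul]; ring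
  rw [h, h0, hv]; ring

/-- The observed-simultaneity class of an event `x` relative to the inertial
observer `{p + t•v}` is the backward light cone of the point
`p + (τ(x) + ρ(x))•v` of the world-line. -/
theorem OS_class_is_backward_cone (p v : M4)
    (hunit : eta v v = 1) (hfut : v 0 > 0) (x : M4) :
    {y : M4 | tau p v y + rho p v y = tau p v x + rho p v x} =
      {y : M4 | eta (y - (p + (tau p v x + rho p v x) • v))
                    (y - (p + (tau p v x + rho p v x) • v)) = 0 ∧
                eta (y - (p + (tau p v x + rho p v x) • v)) v ≤ 0} := by
  ext y
  simp only [Set.mem_ofPred_eq]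
  generalize tau p v x + rho p v x = c
  rw [eta_sub_worldline_self p v y c hunit, eta_sub_worldline_right p v y c hunit]
  have hr : 0 ≤ rho p v y := Real.sqrt_nonneg _
  constructor
  · rintro rfl
    exact ⟨by ring, by linarith⟩
  · rintro ⟨h1, h2⟩
    -- `τ(y) - c = ±ρ(y)`, and in the `+` case both sides are zero by their signs.
    rcases sq_eq_sq_iff_eq_or_eq_neg.1 (sub_eq_zero.1 h1) with h | h <;> linarith
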